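/- For every b ∈ ℤ and x, y ∈ ℝ, the function a ↦ K(a, x, y, b) is smooth on (0, ∞), and for all a > 0 it satisfies the differential identity (x² + y²) K(a, x, y, b) + 4a ∂²_{aa} K(a, x, y, b) + 4 ∂_a K(a, x, y, b) = (b²/a) K(a, x, y, b). -/

import Mathlib

open Complex

/-- The alternate Vandermonde convolution `F_{ℓ₁,ℓ₂}(k)`. -/
def altVandermonde (ℓ₁ ℓ₂ : ℕ) (k : ℤ) : ℤ :=
  ∑ l₁ ∈ Finset.range (ℓ₁ + 1), ∑ l₂ ∈ Finset.range (ℓ₂ + 1),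
    (-1) ^ (ℓ₂ - l₂) * (ℓ₁.choose l₁ : ℤ) * (ℓ₂.choose l₂ : ℤ) *
      (if 2 * ((l₁ : ℤ) + l₂) = k + ℓ₁ + ℓ₂ then 1 else 0)

/-- The boundary Fourier kernel
`K(a,x,y,b) = ∑_{ℓ₁,ℓ₂} (a/4)^{(ℓ₁+ℓ₂)/2} F_{ℓ₁,ℓ₂}(b) (iy)^{ℓ₁} x^{ℓ₂}/(ℓ₁! ℓ₂!)`. -/
noncomputable def boundaryKernel (a x y : ℝ) (b : ℤ) : ℂ :=
  ∑' ℓ : ℕ × ℕ,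
    (((a / 4) ^ (((ℓ.1 : ℝ) + ℓ.2) / 2) : ℝ) : ℂ) * (altVandermonde ℓ.1 ℓ.2 b : ℂ) *
      (I * y) ^ ℓ.1 * (x : ℂ) ^ ℓ.2 / ((ℓ.1.factorial : ℂ) * ℓ.2.factorial)

noncomputable def bkPS (c : ℕ → ℂ) (r : ℝ) : ℂ := ∑' n, c n * (r : ℂ) ^ n

def bkBd (c : ℕ → ℂ) : Prop := ∃ C A : ℝ, 0 ≤ C ∧ 0 ≤ A ∧ ∀ n, ‖c n‖ ≤ C * (A ^ n / n.factorial)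

noncomputable def bkD (c : ℕ → ℂ) : ℕ → ℂ := fun n => ((n : ℂ) + 1) * c (n + 1)

lemma bkBd_D {c : ℕ → ℂ} (h : bkBd c) : bkBd (bkD c) := by
  obtain ⟨C, A, hC, hA, h⟩ := h
  refine ⟨C * A, A, by positivity, hA, fun n => ?_⟩
  have h1 : ‖((n : ℂ) + 1)‖ = (n : ℝ) + 1 := by
    have : ((n : ℂ) + 1) = ((n + 1 : ℕ) : ℂ) := by push_cast; ring
    rw [this, Complex.norm_natCast]; push_cast; ring
  simp only [bkD, norm_mul, h1]
  calc ((n : ℝ) + 1) * ‖c (n + 1)‖ ≤ ((n : ℝ) + 1) * (C * (A ^ (n + 1) / (n + 1).factorial)) := by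
        gcongr; exact h _
    _ = C * A * (A ^ n / n.factorial) := by
        rw [Nat.factorial_succ]; push_cast
        have : (n.factorial : ℝ) ≠ 0 := by positivity
        have : (n : ℝ) + 1 ≠ 0 := by positivity
        field_simp
        try ring

lemma bkBd_summable {c : ℕ → ℂ} (h : bkBd c) (R : ℝ) (hR : 0 ≤ R) :
    Summable fun n => ‖c n‖ * R ^ n := by
  obtain ⟨C, A, hC, hA, h⟩ := h
  refine Summable.of_nonneg_of_le (fun n => by positivity) (fun n => ?_)
    ((Real.summable_pow_div_factorial (A * R)).mul_left C)
  calc ‖c n‖ * R ^ n ≤ C * (A ^ n / n.factorial) * R ^ n := by gcongr; exact h n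
    _ = _ := by rw [mul_pow]; ring

lemma bkPS_summable {c : ℕ → ℂ} (h : bkBd c) (r : ℝ) :
    Summable fun n => c n * (r : ℂ) ^ n := by
  refine Summable.of_norm ((bkBd_summable h |r| (abs_nonneg r)).congr fun n => ?_)
  simp

lemma bkPS_hasDerivAt {c : ℕ → ℂ} (h : bkBd c) (r : ℝ) :
    HasDerivAt (bkPS c) (bkPS (bkD c) r) r := by
  have hR : 0 ≤ |r| + 1 := by positivity
  have key := hasDerivAt_tsum_of_isPreconnected (𝕜 := ℝ)
    (g := fun n (y : ℝ) => c n * (y : ℂ) ^ n)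
    (g' := fun n (y : ℝ) => c n * ((n : ℂ) * (y : ℂ) ^ (n - 1)))
    (u := fun n => ‖c n‖ * (n * (|r| + 1) ^ (n - 1)))
    (t := Metric.ball 0 (|r| + 1)) (y₀ := 0) (y := r) ?_ Metric.isOpen_ball
    (convex_ball _ _).isPreconnected ?_ ?_ (by simp; positivity) ?_ (by simp)
  · have e : bkPS (bkD c) r = ∑' n, c n * ((n : ℂ) * (r : ℂ) ^ (n - 1)) := by
      rw [tsum_eq_zero_add']
      · simp only [bkPS, bkD]; simp
        refine tsum_congr fun n => ?_
        ring
      · refine (bkPS_summable (bkBd_D h) r).congr fun n => ?_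
        simp [bkD]; ring
    rw [e]; exact key
  · rw [← summable_nat_add_iff 1]
    refine (bkBd_summable (bkBd_D h) _ hR).congr fun n => ?_
    have h1 : ‖((n : ℂ) + 1)‖ = (n : ℝ) + 1 := by
      have : ((n : ℂ) + 1) = ((n + 1 : ℕ) : ℂ) := by push_cast; ring
      rw [this, Complex.norm_natCast]; push_cast; ring
    simp [bkD, h1]; ring
  · intro n y _
    have := ((hasDerivAt_pow n (y : ℂ)).comp_ofReal).const_mul (c n)
    simpa using this
  · intro n y hy
    have : |y| ≤ |r| + 1 := by simpa using (mem_ball_zero_iff.1 hy).le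
    simp only [norm_mul, norm_pow, Complex.norm_natCast, Complex.norm_real, Real.norm_eq_abs]
    gcongr
  · exact bkPS_summable h 0

lemma bkPS_contDiff (k : ℕ) : ∀ {c : ℕ → ℂ}, bkBd c → ContDiff ℝ k (bkPS c) := by
  induction k with
  | zero =>
    intro c h
    exact contDiff_zero.2 (continuous_iff_continuousAt.2 fun r => (bkPS_hasDerivAt h r).continuousAt)
  | succ k ih =>
    intro c h
    push_cast
    rw [contDiff_succ_iff_deriv]
    refine ⟨fun r => (bkPS_hasDerivAt h r).differentiableAt, by simp, ?_⟩
    rw [show deriv (bkPS c) = bkPS (bkD c) from funext fun r => (bkPS_hasDerivAt h r).deriv]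
    exact ih (bkBd_D h)

/-- The Taylor coefficients in the variable `r = sqrt a / 2`. -/
noncomputable def bkC (w v : ℂ) (b : ℤ) (n : ℕ) : ℂ :=
  ∑ p ∈ Finset.HasAntidiagonal.antidiagonal n,
    if (p.1 : ℤ) - p.2 = b then w ^ p.1 * v ^ p.2 / (p.1.factorial * p.2.factorial) else 0

lemma bkC_eq (w v : ℂ) (b : ℤ) (m j : ℕ) (h : (m : ℤ) - j = b) :
    bkC w v b (m + j) = w ^ m * v ^ j / (m.factorial * j.factorial) := by
  rw [bkC, Finset.sum_eq_single (m, j)]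
  · simp [h]
  · rintro ⟨p, q⟩ hp hne
    simp only [Finset.HasAntidiagonal.mem_antidiagonal] at hp
    rw [if_neg]
    intro h'
    apply hne
    simp only at h'
    ext <;> simp <;> omega
  · simp

lemma bkC_zero (w v : ℂ) (b : ℤ) (n : ℕ) (h : ∀ m j : ℕ, m + j = n → (m : ℤ) - j ≠ b) :
    bkC w v b n = 0 := by
  refine Finset.sum_eq_zero fun p hp => if_neg (h _ _ (Finset.HasAntidiagonal.mem_antidiagonal.1 hp))

lemma bkC_rec (w v : ℂ) (b : ℤ) (n : ℕ) :
    ((b : ℂ) ^ 2 - ((n : ℂ) + 2) ^ 2) * bkC w v b (n + 2) = - (4 * (w * v)) * bkC w v b n := by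
  by_cases h : ∃ m j : ℕ, m + j = n ∧ (m : ℤ) - j = b
  · obtain ⟨m, j, rfl, h⟩ := h
    rw [bkC_eq w v b m j h, show m + j + 2 = (m + 1) + (j + 1) by ring,
      bkC_eq w v b (m + 1) (j + 1) (by push_cast; omega), ← h]
    rw [Nat.factorial_succ, Nat.factorial_succ]
    have h1 : (m.factorial : ℂ) ≠ 0 := by exact_mod_cast m.factorial_ne_zero
    have h2 : (j.factorial : ℂ) ≠ 0 := by exact_mod_cast j.factorial_ne_zero
    have h3 : (m : ℂ) + 1 ≠ 0 := by exact_mod_cast m.succ_ne_zero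
    have h4 : (j : ℂ) + 1 ≠ 0 := by exact_mod_cast j.succ_ne_zero
    push_cast
    field_simp
    ring
  · push Not at h
    rw [bkC_zero w v b n h, mul_zero]
    by_cases h' : ∃ m j : ℕ, m + j = n + 2 ∧ (m : ℤ) - j = b
    · obtain ⟨m, j, h1, h2⟩ := h'
      have : b = (n : ℤ) + 2 ∨ b = -((n : ℤ) + 2) := by
        rcases m with _ | m
        · right; omega
        · rcases j with _ | j
          · left; omega
          · exact absurd (by push_cast at h2; omega) (h m j (by omega))
      rcases this with e | e <;> rw [e] <;> push_cast <;> ring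
    · push Not at h'
      rw [bkC_zero w v b _ h', mul_zero]

lemma bkC_bd (w v : ℂ) (b : ℤ) : bkBd (bkC w v b) := by
  refine ⟨1, ‖w‖ + ‖v‖, zero_le_one, by positivity, fun n => ?_⟩
  rw [one_mul, bkC, (Commute.all ‖w‖ ‖v‖).add_pow', Finset.sum_div]
  refine (norm_sum_le _ _).trans (Finset.sum_le_sum fun p hp => ?_)
  rw [Finset.HasAntidiagonal.mem_antidiagonal] at hp
  have : (n.choose p.1 • (‖w‖ ^ p.1 * ‖v‖ ^ p.2)) / (n.factorial : ℝ)
      = ‖w ^ p.1 * v ^ p.2 / (p.1.factorial * p.2.factorial)‖ := by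
    rw [← hp, nsmul_eq_mul, Nat.cast_add_choose]
    simp
    have : ((p.1 + p.2).factorial : ℝ) ≠ 0 := by positivity
    field_simp
  rw [this]
  split_ifs <;> simp
  positivity

lemma bkC_small (w v : ℂ) (b : ℤ) :
    ((b : ℂ) ^ 2) * bkC w v b 0 = 0 ∧ ((b : ℂ) ^ 2 - 1) * bkC w v b 1 = 0 := by
  constructor
  · by_cases h : b = 0
    · simp [h]
    · rw [bkC_zero, mul_zero]
      intro m j h1; omega
  · by_cases h : b = 1 ∨ b = -1
    · rcases h with h | h <;> simp [h]
    · rw [bkC_zero, mul_zero]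
      intro m j h1; omega

/-- The Bessel-type equation in the variable `r`. -/
lemma bkPS_ode (w v : ℂ) (b : ℤ) (r : ℝ) :
    (b : ℂ) ^ 2 * bkPS (bkC w v b) r - (r : ℂ) ^ 2 * bkPS (bkD (bkD (bkC w v b))) r
      - (r : ℂ) * bkPS (bkD (bkC w v b)) r = - (4 * (w * v)) * ((r : ℂ) ^ 2 * bkPS (bkC w v b) r) := by
  set c := bkC w v b with hc
  have h0 : bkBd c := bkC_bd w v b
  have s0 := (bkPS_summable h0 r).hasSum
  have s1 := (bkPS_summable (bkBd_D h0) r).hasSum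
  have s2 := (bkPS_summable (bkBd_D (bkBd_D h0)) r).hasSum
  have t1 : HasSum (fun n : ℕ => (n : ℂ) * c n * (r : ℂ) ^ n) ((r : ℂ) * bkPS (bkD c) r) := by
    rw [← hasSum_nat_add_iff' 1]
    simp only [Finset.sum_range_one, Nat.cast_zero, zero_mul, sub_zero]
    refine (s1.mul_left (r : ℂ)).congr_fun ?_
    intro n; simp [bkD]; ring
  have t2 : HasSum (fun n : ℕ => (n : ℂ) * (n - 1) * c n * (r : ℂ) ^ n)
      ((r : ℂ) ^ 2 * bkPS (bkD (bkD c)) r) := by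
    rw [← hasSum_nat_add_iff' 2]
    simp only [Finset.sum_range_succ, Finset.sum_range_zero]
    simp
    refine (s2.mul_left ((r : ℂ) ^ 2)).congr_fun ?_
    intro n; simp [bkD]; ring
  have t := (((s0.mul_left ((b : ℂ) ^ 2)).sub t2).sub t1)
  rw [← hasSum_nat_add_iff' 2] at t
  have e := (s0.mul_left ((r : ℂ) ^ 2)).mul_left (- (4 * (w * v)))
  have := t.unique (e.congr_fun ?_)
  · rw [← show bkPS c r = ∑' n, c n * (r : ℂ) ^ n from rfl] at this
    rw [← this]
    obtain ⟨q0, q1⟩ := bkC_small w v b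
    simp only [Finset.sum_range_succ, Finset.sum_range_zero]
    push_cast
    rw [← hc] at q0 q1
    linear_combination (- q0 - r * q1) * (-1)
  · intro n
    have := bkC_rec w v b n
    rw [← hc] at this
    push_cast
    linear_combination (r : ℂ) ^ (n + 2) * this

open LaurentPolynomial in
lemma bk_coeff_CT (z : ℂ) (k b : ℤ) :
    (C z * T k : LaurentPolynomial ℂ).coeff b = if k = b then z else 0 := by
  rw [← LaurentPolynomial.single_eq_C_mul_T, AddMonoidAlgebra.coeff_single, Finsupp.single_apply]

open LaurentPolynomial in
lemma bk_coeff_C_mul (z : ℂ) (f : LaurentPolynomial ℂ) (b : ℤ) :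
    (C z * f).coeff b = z * f.coeff b := by
  rw [← LaurentPolynomial.smul_eq_C_mul]; simp

open LaurentPolynomial in
lemma bk_altV (l₁ l₂ : ℕ) (b : ℤ) :
    ((altVandermonde l₁ l₂ b : ℤ) : ℂ) =
      ((T 1 + T (-1)) ^ l₁ * (T 1 - T (-1)) ^ l₂ : LaurentPolynomial ℂ).coeff b := by
  have e : (T 1 - T (-1) : LaurentPolynomial ℂ) = T 1 + C (-1) * T (-1) := by simp; ring
  rw [e, add_pow, add_pow, Finset.sum_mul_sum, AddMonoidAlgebra.coeff_sum, Finsupp.finsetSum_apply,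
    altVandermonde]
  push_cast
  refine Finset.sum_congr rfl fun i hi => ?_
  rw [AddMonoidAlgebra.coeff_sum, Finsupp.finsetSum_apply]
  refine Finset.sum_congr rfl fun j hj => ?_
  simp only [Finset.mem_range] at hi hj
  have : (T 1 ^ i * T (-1) ^ (l₁ - i) * (l₁.choose i : LaurentPolynomial ℂ) *
      (T 1 ^ j * (C (-1) * T (-1)) ^ (l₂ - j) * (l₂.choose j : LaurentPolynomial ℂ)))
      = C ((-1) ^ (l₂ - j) * (l₁.choose i : ℂ) * (l₂.choose j : ℂ)) *
        T (2 * ((i : ℤ) + j) - l₁ - l₂) := by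
    have h1 : (T (2 * ((i : ℤ) + j) - l₁ - l₂) : LaurentPolynomial ℂ) =
        T 1 ^ i * T (-1) ^ (l₁ - i) * (T 1 ^ j * T (-1) ^ (l₂ - j)) := by
      simp only [T_pow, ← T_add]
      congr 1
      rw [Nat.cast_sub (by omega), Nat.cast_sub (by omega)]
      ring
    rw [h1, map_mul, map_mul, map_pow, map_natCast, map_natCast, mul_pow]
    ring
  rw [this, bk_coeff_CT]
  by_cases h : 2 * ((i : ℤ) + j) = b + l₁ + l₂
  · rw [if_pos h, if_pos (by omega)]; simp
  · rw [if_neg h, if_neg (by omega)]; simp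

lemma bk_choose (p q : ℕ) (z : ℂ) :
    ((p + q).choose p : ℂ) * z = (p + q).factorial * (z / (p.factorial * q.factorial)) := by
  rw [Nat.cast_add_choose]; ring

open LaurentPolynomial in
lemma bk_coeff_pow (w v : ℂ) (b : ℤ) (n : ℕ) :
    ((C w * T 1 + C v * T (-1)) ^ n : LaurentPolynomial ℂ).coeff b =
      n.factorial * bkC w v b n := by
  rw [(Commute.all _ _).add_pow', AddMonoidAlgebra.coeff_sum, Finsupp.finsetSum_apply, bkC,
    Finset.mul_sum]
  refine Finset.sum_congr rfl fun p hp => ?_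
  rw [Finset.HasAntidiagonal.mem_antidiagonal] at hp
  have : (n.choose p.1 • ((C w * T 1) ^ p.1 * (C v * T (-1)) ^ p.2) : LaurentPolynomial ℂ) =
      C ((n.choose p.1 : ℂ) * (w ^ p.1 * v ^ p.2)) * T ((p.1 : ℤ) - p.2) := by
    have h1 : (T ((p.1 : ℤ) - p.2) : LaurentPolynomial ℂ) = T 1 ^ p.1 * T (-1) ^ p.2 := by
      simp only [T_pow, ← T_add]
      congr 1
      ring
    rw [h1, nsmul_eq_mul, map_mul, map_mul, map_pow, map_pow, map_natCast, mul_pow, mul_pow]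
    ring
  rw [this, bk_coeff_CT]
  subst hp
  split_ifs
  · exact bk_choose _ _ _
  · simp

open LaurentPolynomial in
lemma bk_sum_antidiag (u x : ℂ) (b : ℤ) (n : ℕ) :
    ∑ p ∈ Finset.HasAntidiagonal.antidiagonal n,
      (altVandermonde p.1 p.2 b : ℂ) * u ^ p.1 * x ^ p.2 / (p.1.factorial * p.2.factorial)
      = bkC (u + x) (u - x) b n := by
  have hn : (n.factorial : ℂ) ≠ 0 := by exact_mod_cast n.factorial_ne_zero
  apply mul_left_cancel₀ hn
  rw [← bk_coeff_pow]
  have e : (C (u + x) * T 1 + C (u - x) * T (-1) : LaurentPolynomial ℂ) =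
      C u * (T 1 + T (-1)) + C x * (T 1 - T (-1)) := by
    rw [map_add, map_sub]; ring
  rw [e, (Commute.all _ _).add_pow', AddMonoidAlgebra.coeff_sum, Finsupp.finsetSum_apply,
    Finset.mul_sum]
  refine Finset.sum_congr rfl fun p hp => ?_
  rw [Finset.HasAntidiagonal.mem_antidiagonal] at hp
  have : (n.choose p.1 • ((C u * (T 1 + T (-1))) ^ p.1 * (C x * (T 1 - T (-1))) ^ p.2) :
        LaurentPolynomial ℂ) =
      C ((n.choose p.1 : ℂ) * (u ^ p.1 * x ^ p.2)) *
        ((T 1 + T (-1)) ^ p.1 * (T 1 - T (-1)) ^ p.2) := by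
    rw [nsmul_eq_mul, map_mul, map_mul, map_pow, map_pow, map_natCast, mul_pow, mul_pow]
    ring
  rw [this, bk_coeff_C_mul, ← bk_altV]
  subst hp
  rw [bk_choose]
  ring

lemma bk_altV_bound (l₁ l₂ : ℕ) (b : ℤ) : ‖((altVandermonde l₁ l₂ b : ℤ) : ℂ)‖ ≤ 2 ^ l₁ * 2 ^ l₂ := by
  have h : ∀ l : ℕ, (2 : ℝ) ^ l = ∑ i ∈ Finset.range (l + 1), (l.choose i : ℝ) := by
    intro l
    have := Nat.sum_range_choose l
    exact_mod_cast this.symm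
  rw [h l₁, h l₂, Finset.sum_mul_sum, altVandermonde]
  push_cast
  refine (norm_sum_le _ _).trans (Finset.sum_le_sum fun i _ => ?_)
  refine (norm_sum_le _ _).trans (Finset.sum_le_sum fun j _ => ?_)
  split_ifs
  · simp
  · simp; positivity

lemma bk_tsum_antidiag (f : ℕ × ℕ → ℂ) (hf : Summable f) :
    ∑' p, f p = ∑' n, ∑ p ∈ Finset.HasAntidiagonal.antidiagonal n, f p := by
  conv_rhs => congr; ext; rw [← Finset.sum_finset_coe, ← tsum_fintype (L := .unconditional _)]
  rw [← Finset.HasAntidiagonal.sigmaAntidiagonalEquivProd.tsum_eq f]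
  exact (Finset.HasAntidiagonal.sigmaAntidiagonalEquivProd.summable_iff.2 hf).tsum_sigma'
    (fun n ↦ (hasSum_fintype _).summable)

lemma boundaryKernel_eq (a x y : ℝ) (b : ℤ) (ha : 0 < a) :
    boundaryKernel a x y b = bkPS (bkC (I * y + x) (I * y - x) b) (Real.sqrt (a / 4)) := by
  set r := Real.sqrt (a / 4) with hr
  have hr0 : 0 ≤ r := Real.sqrt_nonneg _
  have hpow : ∀ p : ℕ × ℕ, (a / 4) ^ (((p.1 : ℝ) + p.2) / 2) = r ^ p.1 * r ^ p.2 := by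
    intro p
    rw [hr, ← pow_add, Real.sqrt_eq_rpow, ← Real.rpow_natCast, ← Real.rpow_mul (by positivity)]
    congr 1
    push_cast; ring
  unfold boundaryKernel
  simp only [hpow]
  rw [bk_tsum_antidiag, bkPS]
  · refine tsum_congr fun n => ?_
    rw [← bk_sum_antidiag, Finset.sum_mul]
    refine Finset.sum_congr rfl fun p hp => ?_
    rw [Finset.HasAntidiagonal.mem_antidiagonal] at hp
    subst hp
    push_cast
    ring
  · have s1 := Real.summable_pow_div_factorial (2 * r * |y|)
    have s2 := Real.summable_pow_div_factorial (2 * r * |x|)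
    refine Summable.of_norm_bounded (s1.mul_of_nonneg s2 (fun n => by positivity)
      (fun n => by positivity)) fun p => ?_
    have := bk_altV_bound p.1 p.2 b
    simp only [norm_mul, norm_div, norm_pow, Complex.norm_natCast, Complex.norm_real,
      Complex.norm_I, Real.norm_eq_abs, abs_of_nonneg hr0, one_mul, ofReal_mul, ofReal_pow]
    calc _ ≤ r ^ p.1 * r ^ p.2 * (2 ^ p.1 * 2 ^ p.2) * |y| ^ p.1 * |x| ^ p.2 /
          (p.1.factorial * p.2.factorial) := by gcongr
      _ = _ := by simp only [mul_pow]; ring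

/-- `a ↦ K(a,x,y,b)` is smooth on `(0,∞)` and satisfies
`(x²+y²)K + 4a ∂²_{aa}K + 4 ∂_a K = (b²/a) K`. -/
theorem boundaryKernel_radial_ODE (b : ℤ) (x y : ℝ) :
    ContDiffOn ℝ (⊤ : ℕ∞) (fun t : ℝ => boundaryKernel t x y b) (Set.Ioi 0) ∧
    ∀ a : ℝ, 0 < a →
      ((x : ℂ) ^ 2 + (y : ℂ) ^ 2) * boundaryKernel a x y b +
          4 * (a : ℂ) * deriv (deriv (fun t : ℝ => boundaryKernel t x y b)) a +
          4 * deriv (fun t : ℝ => boundaryKernel t x y b) a =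
        ((b : ℂ) ^ 2 / (a : ℂ)) * boundaryKernel a x y b := by
  set c := bkC (I * y + x) (I * y - x) b with hc
  have hb : bkBd c := bkC_bd _ _ _
  have hK : ∀ t : ℝ, 0 < t → boundaryKernel t x y b = bkPS c (Real.sqrt (t / 4)) :=
    fun t ht => boundaryKernel_eq t x y b ht
  constructor
  · refine ContDiffOn.congr (f := fun t : ℝ => bkPS c (Real.sqrt (t / 4))) ?_ (fun t ht => hK t ht)
    refine ContDiff.comp_contDiffOn (contDiff_infty.2 fun k => bkPS_contDiff k hb) ?_
    refine ContDiffOn.sqrt (by fun_prop) ?_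
    intro t ht
    have : (0 : ℝ) < t := ht
    positivity
  · intro a ha
    have hs : ∀ t : ℝ, 0 < t →
        HasDerivAt (fun t : ℝ => Real.sqrt (t / 4)) (1 / (8 * Real.sqrt (t / 4))) t := by
      intro t ht
      have := ((hasDerivAt_id t).div_const 4).sqrt (by simp; positivity)
      refine HasDerivAt.congr_deriv this ?_
      change 1 / 4 / (2 * Real.sqrt (t / 4)) = 1 / (8 * Real.sqrt (t / 4))
      have h0 : Real.sqrt (t / 4) ≠ 0 := by positivity
      generalize Real.sqrt (t / 4) = r at *
      field_simp
      norm_num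
    have hpos : ∀ t : ℝ, 0 < t → Real.sqrt (t / 4) ≠ 0 := fun t ht => by positivity
    have d1 : ∀ t : ℝ, 0 < t → HasDerivAt (fun t : ℝ => boundaryKernel t x y b)
        ((1 / (8 * Real.sqrt (t / 4)) : ℝ) • bkPS (bkD c) (Real.sqrt (t / 4))) t := by
      intro t ht
      refine (HasDerivAt.scomp t (bkPS_hasDerivAt hb _) (hs t ht)).congr_of_eventuallyEq ?_
      filter_upwards [Ioi_mem_nhds ht] with s hs
      exact hK s hs
    have hinv : HasDerivAt (fun t : ℝ => 1 / (8 * Real.sqrt (t / 4)))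
        (-(8 * (1 / (8 * Real.sqrt (a / 4)))) / (8 * Real.sqrt (a / 4)) ^ 2) a := by
      have := ((hs a ha).const_mul 8).inv (by have := hpos a ha; positivity)
      simp only [one_div] at this ⊢
      exact this
    have d2 : HasDerivAt (deriv (fun t : ℝ => boundaryKernel t x y b)) _ a :=
      (hinv.smul (HasDerivAt.scomp a (bkPS_hasDerivAt (bkBd_D hb) _) (hs a ha))).congr_of_eventuallyEq
        (by
          filter_upwards [Ioi_mem_nhds ha] with s hs
          exact (d1 s hs).deriv)
    rw [d2.deriv, (d1 a ha).deriv, hK a ha]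
    have ode := bkPS_ode (I * y + x) (I * y - x) b (Real.sqrt (a / 4))
    rw [← hc] at ode
    have hr := hpos a ha
    have har : a = 4 * Real.sqrt (a / 4) ^ 2 := by rw [Real.sq_sqrt (by positivity)]; ring
    simp only [Function.comp]
    generalize Real.sqrt (a / 4) = r at *
    subst har
    have hr' : (r : ℂ) ≠ 0 := by exact_mod_cast hr
    have hI : (I * y + x) * (I * y - x) = -((x : ℂ) ^ 2 + (y : ℂ) ^ 2) := by
      linear_combination (y : ℂ) ^ 2 * I_sq
    rw [hI] at ode
    simp only [Complex.real_smul]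
    push_cast
    generalize bkPS c r = G0 at *
    generalize bkPS (bkD c) r = G1 at *
    generalize bkPS (bkD (bkD c)) r = G2 at *
    field_simp
    linear_combination (-64) * ode
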